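/- arXiv:1802.09308 — 3 statements merged into one kernel-verified Lean document; each statement's English description precedes it below -/
import Mathlib

section
/- Let m be a real number and s > 0. If the real random variable X has the Gaussian distribution N(m, s²), then the expectation of |X| equals s·√(2/π)·exp(−m²/(2s²)) + m·(1 − 2Φ(−m/s)), where Φ denotes the standard normal cumulative distribution function. -/
open MeasureTheory ProbabilityTheory Real
open scoped NNReal

/-- The standard normal cumulative distribution function `Φ(t) = P(Z ≤ t)`
for `Z ~ N(0,1)`. -/
noncomputable def stdNormalCDF (t : ℝ) : ℝ :=
  (gaussianReal 0 1 (Set.Iic t)).toReal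

/-!
The density `φ` of `N(μ, v)` satisfies `φ' x = -(x - μ) / v * φ x`, so the partial first moment
`∫ x in Iic c, (x - μ) ∂N(μ, v)` is `-v * φ c`. Since `|y| = y - 2 * y * 1_{y ≤ 0}`, this and the
mass of `Iic c` determine the mean absolute deviation about `c`; the theorem is the case `c = 0`.
-/

open Filter Set

open scoped Topology

theorem integral_abs_eq_integral_sub_two_mul_setIntegral {α : Type*} [MeasurableSpace α]
    {ν : Measure α} {f : α → ℝ} (hf : Integrable f ν) :
    ∫ x, |f x| ∂ν = (∫ x, f x ∂ν) - 2 * ∫ x in {x | f x ≤ 0}, f x ∂ν := by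
  have hmeas : NullMeasurableSet {x | f x ≤ 0} ν :=
    nullMeasurableSet_le hf.aemeasurable aemeasurable_const
  have habs (x : α) : |f x| = f x - 2 * {x | f x ≤ 0}.indicator f x := by
    rcases le_or_gt (f x) 0 with h | h
    · rw [indicator_of_mem (by simpa using h), abs_of_nonpos h]
      ring
    · rw [indicator_of_notMem (by simpa using h), abs_of_pos h]
      ring
  simp_rw [habs]
  rw [integral_sub hf ((hf.indicator₀ hmeas).const_mul 2), integral_const_mul,
    integral_indicator₀ hmeas]

section Density

variable {E : Type*} [NormedAddCommGroup E] [NormedSpace ℝ E] {μ : ℝ} {v : ℝ≥0}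

theorem integrable_gaussianReal_iff_integrable_smul (hv : v ≠ 0) {f : ℝ → E} :
    Integrable f (gaussianReal μ v) ↔ Integrable (fun x ↦ gaussianPDFReal μ v x • f x) := by
  rw [gaussianReal_of_var_ne_zero μ hv, integrable_withDensity_iff_integrable_smul'
    (measurable_gaussianPDF μ v) (ae_of_all _ fun _ ↦ gaussianPDF_lt_top)]
  simp only [toReal_gaussianPDF]

theorem setIntegral_gaussianReal_eq_setIntegral_smul (hv : v ≠ 0) (f : ℝ → E) (s : Set ℝ) :
    ∫ x in s, f x ∂gaussianReal μ v = ∫ x in s, gaussianPDFReal μ v x • f x := by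
  rw [gaussianReal_of_var_ne_zero μ hv, setIntegral_withDensity_eq_setIntegral_toReal_smul' s
    (measurable_gaussianPDF μ v) (ae_of_all _ fun _ ↦ gaussianPDF_lt_top)]
  simp only [toReal_gaussianPDF]

end Density

theorem hasDerivAt_gaussianPDFReal (μ : ℝ) (v : ℝ≥0) (x : ℝ) :
    HasDerivAt (gaussianPDFReal μ v) (-(x - μ) / v * gaussianPDFReal μ v x) x := by
  have hexponent : HasDerivAt (fun y ↦ -(y - μ) ^ 2 / (2 * v)) (-(x - μ) / v) x :=
    ((((hasDerivAt_id x).sub_const μ).pow 2).neg.div_const (2 * (v : ℝ))).congr_deriv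
      (by push_cast [id_eq]; ring)
  refine (hexponent.exp.const_mul (√(2 * π * v))⁻¹).congr_deriv ?_
  rw [gaussianPDFReal_def]
  ring

theorem integrable_sub_const_gaussianReal (μ : ℝ) (v : ℝ≥0) (c : ℝ) :
    Integrable (fun x ↦ x - c) (gaussianReal μ v) :=
  ((memLp_id_gaussianReal 1).integrable (by simp)).sub (integrable_const c)

theorem setIntegral_Iic_sub_mean_gaussianReal (μ : ℝ) (v : ℝ≥0) (c : ℝ) :
    ∫ x in Iic c, (x - μ) ∂gaussianReal μ v = -(v * gaussianPDFReal μ v c) := by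
  rcases eq_or_ne v 0 with rfl | hv
  · rw [gaussianReal_zero_var, setIntegral_dirac]
    simp
  have hderiv (x : ℝ) : HasDerivAt (fun y ↦ -(v * gaussianPDFReal μ v y))
      (gaussianPDFReal μ v x • (x - μ)) x := by
    refine ((hasDerivAt_gaussianPDFReal μ v x).const_mul (v : ℝ)).neg.congr_deriv ?_
    have : (v : ℝ) ≠ 0 := by exact_mod_cast hv
    rw [smul_eq_mul]
    field_simp
  have hint : IntegrableOn (fun x ↦ gaussianPDFReal μ v x • (x - μ)) (Iic c) :=
    ((integrable_gaussianReal_iff_integrable_smul hv).1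
      (integrable_sub_const_gaussianReal μ v μ)).integrableOn
  have hlim : Tendsto (fun y ↦ -(v * gaussianPDFReal μ v y)) atBot (𝓝 0) :=
    tendsto_zero_of_hasDerivAt_of_integrableOn_Iic (fun x _ ↦ hderiv x) hint
      ((integrable_gaussianPDFReal μ v).const_mul (v : ℝ)).neg.integrableOn
  rw [setIntegral_gaussianReal_eq_setIntegral_smul hv,
    integral_Iic_of_hasDerivAt_of_tendsto' (fun x _ ↦ hderiv x) hint hlim, sub_zero]

theorem setIntegral_Iic_sub_const_gaussianReal (μ : ℝ) (v : ℝ≥0) (c : ℝ) :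
    ∫ x in Iic c, (x - c) ∂gaussianReal μ v =
      (μ - c) * (gaussianReal μ v).real (Iic c) - v * gaussianPDFReal μ v c := by
  have hsplit : (fun x ↦ x - c) = fun x ↦ (x - μ) + (μ - c) :=
    funext fun x ↦ (sub_add_sub_cancel x μ c).symm
  rw [hsplit, integral_add (integrable_sub_const_gaussianReal μ v μ).integrableOn
    (integrable_const _), setIntegral_Iic_sub_mean_gaussianReal, setIntegral_const, smul_eq_mul]
  ring

theorem integral_abs_sub_const_gaussianReal (μ : ℝ) (v : ℝ≥0) (c : ℝ) :
    ∫ x, |x - c| ∂gaussianReal μ v =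
      2 * v * gaussianPDFReal μ v c + (μ - c) * (1 - 2 * (gaussianReal μ v).real (Iic c)) := by
  have hmean : ∫ x, (x - c) ∂gaussianReal μ v = μ - c := by
    rw [integral_sub (f := fun x ↦ x) ((memLp_id_gaussianReal 1).integrable (by simp))
      (integrable_const c), integral_id_gaussianReal, integral_const, probReal_univ, one_smul]
  have hset : {x : ℝ | x - c ≤ 0} = Iic c := by
    ext x
    simp
  rw [integral_abs_eq_integral_sub_two_mul_setIntegral (integrable_sub_const_gaussianReal μ v c),
    hmean, hset, setIntegral_Iic_sub_const_gaussianReal]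
  ring

theorem gaussianReal_map_standardize (μ : ℝ) {v : ℝ≥0} (hv : v ≠ 0) :
    (gaussianReal μ v).map (fun x ↦ (x - μ) / √v) = gaussianReal 0 1 := by
  have hsq : NNReal.mk (√v ^ 2) (sq_nonneg _) = v := NNReal.eq (sq_sqrt v.coe_nonneg)
  change (gaussianReal μ v).map ((· / √v) ∘ (· - μ)) = gaussianReal 0 1
  rw [← Measure.map_map (by fun_prop) (by fun_prop), gaussianReal_map_sub_const,
    gaussianReal_map_div_const, sub_self, zero_div, hsq, div_self hv]

theorem measureReal_gaussianReal_Iic_eq_stdNormalCDF (μ : ℝ) {v : ℝ≥0} (hv : v ≠ 0) (c : ℝ) :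
    (gaussianReal μ v).real (Iic c) = stdNormalCDF ((c - μ) / √v) := by
  have hpos : 0 < √(v : ℝ) := sqrt_pos.2 (by exact_mod_cast pos_of_ne_zero hv)
  have hpreimage : (fun x ↦ (x - μ) / √v) ⁻¹' Iic ((c - μ) / √v) = Iic c := by
    ext x
    simp [div_le_div_iff_of_pos_right hpos]
  rw [stdNormalCDF, ← gaussianReal_map_standardize μ hv,
    Measure.map_apply (by fun_prop) measurableSet_Iic, hpreimage, Measure.real]

theorem two_mul_variance_mul_gaussianPDFReal (μ : ℝ) (v : ℝ≥0) (x : ℝ) :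
    2 * v * gaussianPDFReal μ v x = √v * √(2 / π) * exp (-(x - μ) ^ 2 / (2 * v)) := by
  have hconst : 2 * v * (√(2 * π * v))⁻¹ = √v * √(2 / π) := by
    calc 2 * v * (√(2 * π * v))⁻¹ = v / √v * (2 / √2 / √π) := by
          rw [sqrt_mul (by positivity), sqrt_mul zero_le_two]
          ring
      _ = √v * √(2 / π) := by rw [div_sqrt, div_sqrt, sqrt_div zero_le_two]
  rw [gaussianPDFReal_def, ← hconst]
  ring

theorem integral_abs_sub_const_gaussianReal_eq_stdNormalCDF (μ : ℝ) {v : ℝ≥0} (hv : v ≠ 0)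
    (c : ℝ) :
    ∫ x, |x - c| ∂gaussianReal μ v =
      √v * √(2 / π) * exp (-(c - μ) ^ 2 / (2 * v)) +
        (μ - c) * (1 - 2 * stdNormalCDF ((c - μ) / √v)) := by
  rw [integral_abs_sub_const_gaussianReal, two_mul_variance_mul_gaussianPDFReal,
    measureReal_gaussianReal_Iic_eq_stdNormalCDF μ hv]

/-- If `X ~ N(m, s²)` then
`E|X| = s·√(2/π)·exp(−m²/(2s²)) + m·(1 − 2Φ(−m/s))`. -/
theorem abs_expectation_gaussian (m s : ℝ) (hs : 0 < s) :
    ∫ x, |x| ∂(gaussianReal m ⟨s ^ 2, sq_nonneg s⟩) =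
      s * Real.sqrt (2 / π) * Real.exp (-(m ^ 2) / (2 * s ^ 2)) +
        m * (1 - 2 * stdNormalCDF (-(m / s))) := by
  let v : ℝ≥0 := ⟨s ^ 2, sq_nonneg s⟩
  have hv : v ≠ 0 := NNReal.coe_ne_zero.1 (pow_pos hs 2).ne'
  have hsqrt : √(v : ℝ) = s := sqrt_sq hs.le
  have hvar : (v : ℝ) = s ^ 2 := rfl
  have h := integral_abs_sub_const_gaussianReal_eq_stdNormalCDF m hv 0
  rw [hsqrt, hvar] at h
  simpa only [sub_zero, zero_sub, neg_sq, neg_div] using h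
end

section
/- Let L ≥ 2, let C > 0, and let μ₁, …, μ_L be vectors in a real inner product space satisfying Σ_{i=1}^{L} μᵢ = 0 and ‖μᵢ‖² ≤ C for every i. Then min_{i ≠ j} ‖μᵢ − μⱼ‖ / 2 ≤ √(LC / (2(L−1))); equivalently, there exist indices i ≠ j with ‖μᵢ − μⱼ‖² ≤ 2LC/(L−1). -/
/-!
Expanding the squares gives `∑ i, ∑ j, ‖v i - v j‖² = 2 (n ∑ i, ‖v i‖² - ‖∑ i, v i‖²)` for `n`
vectors. If the mean of the `‖v i‖²` is at most `C`, the right-hand side is at most `2 n² C`. The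
diagonal terms on the left vanish, so one of the `n (n - 1)` remaining terms is at most
`2 n C / (n - 1)`.
-/

section InnerProductSpace

open Finset RCLike

variable (𝕜 : Type*) {V ι : Type*} [RCLike 𝕜] [SeminormedAddCommGroup V] [InnerProductSpace 𝕜 V]

theorem sum_sum_re_inner_eq_norm_sum_sq (s : Finset ι) (v : ι → V) :
    ∑ i ∈ s, ∑ j ∈ s, re (inner 𝕜 (v i) (v j)) = ‖∑ i ∈ s, v i‖ ^ 2 := by
  simp only [← inner_self_eq_norm_sq (𝕜 := 𝕜), sum_inner, inner_sum, map_sum]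
  exact sum_comm

include 𝕜

theorem sum_sum_norm_sub_sq (s : Finset ι) (v : ι → V) :
    ∑ i ∈ s, ∑ j ∈ s, ‖v i - v j‖ ^ 2 =
      2 * (#s * ∑ i ∈ s, ‖v i‖ ^ 2 - ‖∑ i ∈ s, v i‖ ^ 2) := by
  simp only [norm_sub_sq (𝕜 := 𝕜), sum_add_distrib, sum_sub_distrib, ← mul_sum,
    sum_sum_re_inner_eq_norm_sum_sq, sum_const, nsmul_eq_mul]
  ring

theorem sum_offDiag_norm_sub_sq_le (s : Finset ι) (v : ι → V) :
    ∑ p ∈ s.offDiag, ‖v p.1 - v p.2‖ ^ 2 ≤ 2 * #s * ∑ i ∈ s, ‖v i‖ ^ 2 :=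
  calc
    ∑ p ∈ s.offDiag, ‖v p.1 - v p.2‖ ^ 2 ≤ ∑ p ∈ s ×ˢ s, ‖v p.1 - v p.2‖ ^ 2 :=
      sum_le_sum_of_subset_of_nonneg (by grind) fun _ _ _ ↦ sq_nonneg _
    _ = 2 * (#s * ∑ i ∈ s, ‖v i‖ ^ 2 - ‖∑ i ∈ s, v i‖ ^ 2) := by
      rw [sum_product, sum_sum_norm_sub_sq 𝕜]
    _ ≤ 2 * #s * ∑ i ∈ s, ‖v i‖ ^ 2 := by
      linarith [sq_nonneg ‖∑ i ∈ s, v i‖]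

theorem exists_ne_norm_sub_sq_le {s : Finset ι} (hs : s.Nontrivial) {v : ι → V} {C : ℝ}
    (hv : ∑ i ∈ s, ‖v i‖ ^ 2 ≤ #s * C) :
    ∃ i ∈ s, ∃ j ∈ s, i ≠ j ∧ ‖v i - v j‖ ^ 2 ≤ 2 * #s * C / (#s - 1) := by
  have hcard : (1 : ℝ) < #s := mod_cast one_lt_card_iff_nontrivial.mpr hs
  have card_offDiag : (#s.offDiag : ℝ) = #s * (#s - 1) := by
    rw [offDiag_card, Nat.cast_sub (Nat.le_mul_self _), Nat.cast_mul]
    ring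
  have hsum : ∑ p ∈ s.offDiag, ‖v p.1 - v p.2‖ ^ 2 ≤
      ∑ _p ∈ s.offDiag, 2 * #s * C / (#s - 1) :=
    calc
      ∑ p ∈ s.offDiag, ‖v p.1 - v p.2‖ ^ 2 ≤ 2 * #s * ∑ i ∈ s, ‖v i‖ ^ 2 :=
        sum_offDiag_norm_sub_sq_le 𝕜 s v
      _ ≤ 2 * #s * (#s * C) := by gcongr
      _ = ∑ _p ∈ s.offDiag, 2 * #s * C / (#s - 1) := by
        rw [sum_const, nsmul_eq_mul, card_offDiag]
        field_simp [(sub_pos.mpr hcard).ne']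
  have hnonempty : s.offDiag.Nonempty := by
    simpa only [← coe_nonempty, coe_offDiag, Set.offDiag_nonempty] using hs
  obtain ⟨⟨i, j⟩, hij, hle⟩ := exists_le_of_sum_le hnonempty hsum
  obtain ⟨hi, hj, hne⟩ := mem_offDiag.mp hij
  exact ⟨i, hi, j, hj, hne, hle⟩

end InnerProductSpace

theorem sInf_dist_le {X ι : Type*} [PseudoMetricSpace X] (x : ι → X) {i j : ι} (hij : i ≠ j) :
    sInf {d : ℝ | ∃ i j : ι, i ≠ j ∧ d = dist (x i) (x j)} ≤ dist (x i) (x j) := by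
  refine csInf_le ⟨0, ?_⟩ ⟨i, j, hij, rfl⟩
  rintro _ ⟨k, l, -, rfl⟩
  exact dist_nonneg

theorem robustness_upper_bound_general (𝕜 : Type*) {V ι : Type*} [RCLike 𝕜]
    [SeminormedAddCommGroup V] [InnerProductSpace 𝕜 V] [Fintype ι] [Nontrivial ι] {C : ℝ}
    (μ : ι → V) (hμ : ∑ i, ‖μ i‖ ^ 2 ≤ Fintype.card ι * C) :
    sInf {d : ℝ | ∃ i j : ι, i ≠ j ∧ d = ‖μ i - μ j‖} / 2 ≤
        √(Fintype.card ι * C / (2 * (Fintype.card ι - 1))) ∧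
      ∃ i j : ι, i ≠ j ∧
        ‖μ i - μ j‖ ^ 2 ≤ 2 * Fintype.card ι * C / (Fintype.card ι - 1) := by
  obtain ⟨i, -, j, -, hij, hle⟩ := exists_ne_norm_sub_sq_le 𝕜 Finset.univ_nontrivial hμ
  refine ⟨?_, i, j, hij, hle⟩
  calc
    sInf {d : ℝ | ∃ i j : ι, i ≠ j ∧ d = ‖μ i - μ j‖} / 2 ≤ ‖μ i - μ j‖ / 2 := by
      gcongr
      simpa only [dist_eq_norm] using sInf_dist_le μ hij
    _ ≤ √(2 * Fintype.card ι * C / (Fintype.card ι - 1) / 2 ^ 2) := by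
      apply Real.le_sqrt_of_sq_le
      rw [div_pow]
      gcongr
      exact hle
    _ = √(Fintype.card ι * C / (2 * (Fintype.card ι - 1))) := by
      congr 1
      rw [mul_comm 2 (_ - _), ← div_div]
      ring

/-- Let `L ≥ 2`, `C > 0` and `μ₁, …, μ_L` be vectors in a real inner product
space with `Σᵢ μᵢ = 0` and `‖μᵢ‖² ≤ C` for every `i`. Then the approximated
robustness `min_{i≠j} ‖μᵢ − μⱼ‖/2` is at most `√(LC/(2(L−1)))`; equivalently,
there exist `i ≠ j` with `‖μᵢ − μⱼ‖² ≤ 2LC/(L−1)`. -/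
theorem robustness_upper_bound {V : Type*} [NormedAddCommGroup V]
    [InnerProductSpace ℝ V] (L : ℕ) (hL : 2 ≤ L) (C : ℝ) (hC : 0 < C)
    (μ : Fin L → V) (hsum : ∑ i, μ i = 0) (hnorm : ∀ i, ‖μ i‖ ^ 2 ≤ C) :
    sInf {d : ℝ | ∃ i j : Fin L, i ≠ j ∧ d = ‖μ i - μ j‖} / 2 ≤
        Real.sqrt ((L : ℝ) * C / (2 * (L - 1))) ∧
      ∃ i j : Fin L, i ≠ j ∧ ‖μ i - μ j‖ ^ 2 ≤ 2 * L * C / (L - 1) := by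
  have : Nontrivial (Fin L) := Fin.nontrivial_iff_two_le.mpr hL
  simpa using robustness_upper_bound_general ℝ μ
    ((Finset.sum_le_card_nsmul _ _ C fun i _ ↦ hnorm i).trans_eq (nsmul_eq_mul _ _))
end

section
/- Let L ≥ 2, let C > 0, and let μ₁, …, μ_L be vectors in a real inner product space satisfying Σ_{i=1}^{L} μᵢ = 0 and max_{i} ‖μᵢ‖² = C. Then min_{i ≠ j} ‖μᵢ − μⱼ‖ / 2 = √(LC / (2(L−1))) holds if and only if the Gram condition holds: ⟨μᵢ, μⱼ⟩ = C for all i = j, and ⟨μᵢ, μⱼ⟩ = C/(1−L) for all i ≠ j. -/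
open scoped RealInnerProductSpace

/-!
Summing squared distances over all ordered pairs gives
`∑_{i ≠ j} ‖μᵢ - μⱼ‖² = 2 (L ∑ᵢ ‖μᵢ‖² - ‖∑ᵢ μᵢ‖²) ≤ 2 L² C`, while the `L (L - 1)` distances are all
at least `√(2LC/(L-1))` as soon as the minimal one equals it, so the sum is also at least `2 L² C`.
Hence equality holds termwise: every `‖μᵢ‖²` is `C` and every distance is the minimal one, and
polarization turns this into the Gram condition.
-/

section MinDist

variable {ι X : Type*} [PseudoMetricSpace X]

/-- The minimal distance between two members of the family `x` with distinct indices, as an infimum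
of real numbers; it is `0` when there are no two distinct indices. The approximated robustness of
the means `x` is half of it. -/
noncomputable def minDist (x : ι → X) : ℝ :=
  sInf {d | ∃ i j, i ≠ j ∧ d = dist (x i) (x j)}

lemma minDist_nonneg (x : ι → X) : 0 ≤ minDist x := by
  refine Real.sInf_nonneg ?_
  rintro _ ⟨_, _, _, rfl⟩
  exact dist_nonneg

lemma minDist_le_dist (x : ι → X) {i j : ι} (hij : i ≠ j) : minDist x ≤ dist (x i) (x j) := by
  refine csInf_le ⟨0, ?_⟩ ⟨i, j, hij, rfl⟩
  rintro _ ⟨_, _, _, rfl⟩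
  exact dist_nonneg

lemma exists_minDist_eq_dist [Finite ι] [Nontrivial ι] (x : ι → X) :
    ∃ i j, i ≠ j ∧ minDist x = dist (x i) (x j) := by
  obtain ⟨i, j, hij⟩ := exists_pair_ne ι
  have nonempty : {d | ∃ i j, i ≠ j ∧ d = dist (x i) (x j)}.Nonempty := ⟨_, i, j, hij, rfl⟩
  refine nonempty.csInf_mem ((Set.finite_range fun p : ι × ι => dist (x p.1) (x p.2)).subset ?_)
  rintro _ ⟨k, l, -, rfl⟩
  exact ⟨(k, l), rfl⟩

end MinDist

section Equidistant

variable {ι V : Type*} [SeminormedAddCommGroup V] [InnerProductSpace ℝ V]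

lemma inner_eq_ite_iff_norm_sq_eq_and_dist_sq_eq [DecidableEq ι] {μ : ι → V} {C c : ℝ} :
    (∀ i j, ⟪μ i, μ j⟫ = if i = j then C else c) ↔
      (∀ i, ‖μ i‖ ^ 2 = C) ∧ Pairwise fun i j => dist (μ i) (μ j) ^ 2 = 2 * (C - c) := by
  simp only [dist_eq_norm, norm_sub_sq_real]
  constructor
  · intro gram
    have norm_sq (i : ι) : ‖μ i‖ ^ 2 = C := by
      rw [← real_inner_self_eq_norm_sq, gram, if_pos rfl]
    refine ⟨norm_sq, fun i j hij => ?_⟩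
    beta_reduce
    rw [norm_sq, norm_sq, gram, if_neg hij]
    ring
  · rintro ⟨norm_sq, dist_sq⟩ i j
    split_ifs with hij
    · rw [← hij, real_inner_self_eq_norm_sq, norm_sq]
    · linarith [dist_sq hij, norm_sq i, norm_sq j]

variable [Fintype ι]

lemma sum_univ_offDiag_const (s : ℝ) :
    ∑ _p ∈ (Finset.univ : Finset ι).offDiag, s =
      Fintype.card ι * ((Fintype.card ι - 1) * s) := by
  rw [Finset.sum_const, Finset.offDiag_card, nsmul_eq_mul, Finset.card_univ,
    Nat.cast_sub (Nat.le_mul_self _), Nat.cast_mul]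
  ring

lemma sum_sum_dist_sq (μ : ι → V) :
    ∑ i, ∑ j, dist (μ i) (μ j) ^ 2 =
      2 * (Fintype.card ι * ∑ i, ‖μ i‖ ^ 2 - ‖∑ i, μ i‖ ^ 2) := by
  simp only [dist_eq_norm, norm_sub_sq_real, Finset.sum_add_distrib, Finset.sum_sub_distrib,
    ← Finset.mul_sum, ← inner_sum, ← sum_inner, real_inner_self_eq_norm_sq, Finset.sum_const,
    Finset.card_univ, nsmul_eq_mul]
  ring

lemma sum_offDiag_dist_sq_le (μ : ι → V) :
    ∑ p ∈ Finset.univ.offDiag, dist (μ p.1) (μ p.2) ^ 2 ≤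
      2 * Fintype.card ι * ∑ i, ‖μ i‖ ^ 2 :=
  calc ∑ p ∈ Finset.univ.offDiag, dist (μ p.1) (μ p.2) ^ 2
      ≤ ∑ p : ι × ι, dist (μ p.1) (μ p.2) ^ 2 :=
        Finset.sum_le_univ_sum_of_nonneg fun _ => sq_nonneg _
    _ = 2 * (Fintype.card ι * ∑ i, ‖μ i‖ ^ 2 - ‖∑ i, μ i‖ ^ 2) := by
        rw [Fintype.sum_prod_type, sum_sum_dist_sq]
    _ ≤ 2 * Fintype.card ι * ∑ i, ‖μ i‖ ^ 2 := by
        linarith [sq_nonneg ‖∑ i, μ i‖]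

/-- The equality case of Rankin's bound `(n - 1) s ≤ 2 n C` on the least squared distance `s` of
`n` points in a ball of squared radius `C`. -/
theorem norm_sq_eq_and_dist_sq_eq_of_le {μ : ι → V} {C s : ℝ}
    (norm_le : ∀ i, ‖μ i‖ ^ 2 ≤ C) (le_dist : Pairwise fun i j => s ≤ dist (μ i) (μ j) ^ 2)
    (hs : 2 * Fintype.card ι * C ≤ (Fintype.card ι - 1) * s) :
    (∀ i, ‖μ i‖ ^ 2 = C) ∧ Pairwise fun i j => dist (μ i) (μ j) ^ 2 = s := by
  rcases isEmpty_or_nonempty ι with _ | _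
  · exact ⟨isEmptyElim, fun i => isEmptyElim i⟩
  have card_pos : (0 : ℝ) < 2 * Fintype.card ι := by
    exact_mod_cast Nat.mul_pos two_pos Fintype.card_pos
  have sum_le_sum_s :
      2 * Fintype.card ι * ∑ _i : ι, C ≤ ∑ _p ∈ (Finset.univ : Finset ι).offDiag, s :=
    calc 2 * Fintype.card ι * ∑ _i : ι, C
        = Fintype.card ι * (2 * Fintype.card ι * C) := by
          rw [Finset.sum_const, nsmul_eq_mul, Finset.card_univ]
          ring
      _ ≤ Fintype.card ι * ((Fintype.card ι - 1) * s) := by gcongr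
      _ = ∑ _p ∈ (Finset.univ : Finset ι).offDiag, s :=
          (sum_univ_offDiag_const s).symm
  have s_le : ∀ p ∈ Finset.univ.offDiag, s ≤ dist (μ p.1) (μ p.2) ^ 2 :=
    fun p hp => le_dist (Finset.mem_offDiag.1 hp).2.2
  have sum_s_le := Finset.sum_le_sum s_le
  have sum_dist_le := sum_offDiag_dist_sq_le μ
  have sum_norm_eq : ∑ i, ‖μ i‖ ^ 2 = ∑ _i : ι, C :=
    le_antisymm (Finset.sum_le_sum fun i _ => norm_le i) <|
      le_of_mul_le_mul_left (sum_le_sum_s.trans (sum_s_le.trans sum_dist_le)) card_pos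
  have sum_s_eq : ∑ _p ∈ Finset.univ.offDiag, s =
      ∑ p ∈ Finset.univ.offDiag, dist (μ p.1) (μ p.2) ^ 2 :=
    sum_s_le.antisymm ((sum_norm_eq ▸ sum_dist_le).trans sum_le_sum_s)
  refine ⟨fun i => ?_, fun i j hij => ?_⟩
  · exact (Finset.sum_eq_sum_iff_of_le fun i _ => norm_le i).1 sum_norm_eq i (Finset.mem_univ i)
  · have mem : (i, j) ∈ Finset.univ.offDiag := by simpa using hij
    exact ((Finset.sum_eq_sum_iff_of_le s_le).1 sum_s_eq (i, j) mem).symm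

theorem robustness_eq_upper_bound_iff_gram_general [Nontrivial ι] [DecidableEq ι] {μ : ι → V}
    {C : ℝ} (norm_le : ∀ i, ‖μ i‖ ^ 2 ≤ C) :
    minDist μ / 2 = √((Fintype.card ι : ℝ) * C / (2 * (Fintype.card ι - 1))) ↔
      ∀ i j, ⟪μ i, μ j⟫ = if i = j then C else C / (1 - Fintype.card ι) := by
  have card_sub_one_pos : (0 : ℝ) < Fintype.card ι - 1 :=
    sub_pos.2 (by exact_mod_cast Fintype.one_lt_card)
  have C_nonneg : 0 ≤ C := (sq_nonneg _).trans (norm_le (Classical.arbitrary ι))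
  have dist_sq_eq : 2 * (C - C / (1 - Fintype.card ι)) =
      2 * Fintype.card ι * C / (Fintype.card ι - 1) := by
    rw [← neg_sub (Fintype.card ι : ℝ) 1]
    field_simp
    ring
  have robustness_eq_iff :
      minDist μ / 2 = √((Fintype.card ι : ℝ) * C / (2 * (Fintype.card ι - 1))) ↔
        minDist μ ^ 2 = 2 * Fintype.card ι * C / (Fintype.card ι - 1) := by
    rw [eq_comm, Real.sqrt_eq_iff_eq_sq (by positivity) (by linarith [minDist_nonneg μ])]
    field_simp
    exact eq_comm
  rw [robustness_eq_iff, inner_eq_ite_iff_norm_sq_eq_and_dist_sq_eq, dist_sq_eq]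
  constructor
  · intro minDist_sq
    refine norm_sq_eq_and_dist_sq_eq_of_le norm_le (fun i j hij => ?_)
      (mul_div_cancel₀ _ card_sub_one_pos.ne').ge
    rw [← minDist_sq]
    exact pow_le_pow_left₀ (minDist_nonneg μ) (minDist_le_dist μ hij) 2
  · rintro ⟨-, dist_sq⟩
    obtain ⟨i, j, hij, minDist_eq⟩ := exists_minDist_eq_dist μ
    rw [minDist_eq, dist_sq hij]

end Equidistant

/-- Let `L ≥ 2`, `C > 0` and `μ₁, …, μ_L` be vectors in a real inner product
space with `Σᵢ μᵢ = 0` and `maxᵢ ‖μᵢ‖² = C`. Then the approximated robustness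
`min_{i≠j} ‖μᵢ − μⱼ‖/2` attains the upper bound `√(LC/(2(L−1)))` if and only
if the Gram condition holds: `⟨μᵢ, μⱼ⟩ = C` for `i = j` and
`⟨μᵢ, μⱼ⟩ = C/(1−L)` for `i ≠ j`. -/
theorem robustness_eq_upper_bound_iff_gram {V : Type*} [NormedAddCommGroup V]
    [InnerProductSpace ℝ V] (L : ℕ) (hL : 2 ≤ L) (C : ℝ) (hC : 0 < C)
    (μ : Fin L → V) (hsum : ∑ i, μ i = 0)
    (hmax : (⨆ i, ‖μ i‖ ^ 2) = C) :
    sInf {d : ℝ | ∃ i j : Fin L, i ≠ j ∧ d = ‖μ i - μ j‖} / 2 =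
        Real.sqrt ((L : ℝ) * C / (2 * (L - 1))) ↔
      ∀ i j : Fin L, ⟪μ i, μ j⟫ = if i = j then C else C / (1 - L) := by
  have : Nontrivial (Fin L) := Fin.nontrivial_iff_two_le.2 hL
  simpa [minDist, dist_eq_norm] using robustness_eq_upper_bound_iff_gram_general (μ := μ)
    fun i => hmax ▸ le_ciSup (f := fun i => ‖μ i‖ ^ 2) (Set.finite_range _).bddAbove i
end
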